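/- Fix a finite constant Δ > 0 and suppose −∞ < M_− < M_+ < ∞, where M_− = inf_{P∈P} θ(P) and M_+ = sup_{P∈P} θ(P); set M = M_+ − M_−, let N be the smallest integer with NΔ > M, and set η_l = (l+1)Δ for l ∈ ℕ0. Let Q be a non-interactive channel from X^n to Z^n with identical marginals Q1 such that the family Q1P = { Q1P : P ∈ P } is dominated by a σ-finite measure. Then there exists a measurable estimator θ̂ : Z^n → ℝ such that for every l ∈ ℕ0: sup_{P∈P} Q P^⊗n( { z ∈ Z^n : |θ̂(z) − θ(P)| > η_l } ) ≤ 4·∑_{k=l+1}^{N−2} max( η_A^{(n)}(Q, kΔ), 0 ), where an empty sum is 0; moreover, θ̂ takes values in { M_− + jΔ : j = 1,…,N−1 } if N ≥ 3, and θ̂ ≡ (M_− + M_+)/2 otherwise. -/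

import Mathlib

open MeasureTheory ProbabilityTheory ENNReal

namespace PrivacyPaper

variable {X Z Ω : Type*} [MeasurableSpace X] [MeasurableSpace Z] [MeasurableSpace Ω]

/-- Total variation distance between two measures:
`d_TV(P0, P1) = sup_{A measurable} |P0(A) - P1(A)|`. -/
noncomputable def dTV (P0 P1 : Measure Ω) : ℝ :=
  ⨆ A : {A : Set Ω // MeasurableSet A}, |(P0 A.1).toReal - (P1 A.1).toReal|

/-- Hellinger distance between two measures, computed via densities with respect to the
dominating measure `P0 + P1`. -/
noncomputable def dH (P0 P1 : Measure Ω) : ℝ :=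
  Real.sqrt (∫ ω, (Real.sqrt ((P0.rnDeriv (P0 + P1) ω).toReal) -
    Real.sqrt ((P1.rnDeriv (P0 + P1) ω).toReal)) ^ 2 ∂(P0 + P1))

/-- Hellinger affinity `ρ(P0, P1) = ∫ √(p0 p1) dμ`, with `μ = P0 + P1`. -/
noncomputable def hellingerAffinity (P0 P1 : Measure Ω) : ℝ :=
  ∫ ω, Real.sqrt ((P0.rnDeriv (P0 + P1) ω).toReal * (P1.rnDeriv (P0 + P1) ω).toReal)
    ∂(P0 + P1)

/-- Modulus of continuity of a functional `θ` over `P` with respect to a distance `d`,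
with values in `ℝ≥0∞`. -/
noncomputable def modulus (d : Measure X → Measure X → ℝ) (P : Set (Measure X))
    (θ : Measure X → ℝ) (ε : ℝ) : ℝ≥0∞ :=
  ⨆ (P0 : Measure X) (_ : P0 ∈ P) (P1 : Measure X) (_ : P1 ∈ P) (_ : d P0 P1 ≤ ε),
    ENNReal.ofReal |θ P0 - θ P1|

/-- Total variation modulus of continuity `ω_TV`. -/
noncomputable def omegaTV (P : Set (Measure X)) (θ : Measure X → ℝ) : ℝ → ℝ≥0∞ :=
  modulus dTV P θ

/-- Hellinger modulus of continuity `ω_H`. -/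
noncomputable def omegaH (P : Set (Measure X)) (θ : Measure X → ℝ) : ℝ → ℝ≥0∞ :=
  modulus dH P θ

/-- Push-forward of a measure through a channel `c` (given as a map into measures):
`(c P)(A) = ∫ c(A|x) dP(x)`. -/
noncomputable def push (c : X → Measure Z) (μ : Measure X) : Measure Z := μ.bind c

/-- Privatized Hellinger modulus `ω_H^{(Q1)}`. -/
noncomputable def omegaHQ (c : X → Measure Z) (P : Set (Measure X)) (θ : Measure X → ℝ) :
    ℝ → ℝ≥0∞ :=
  modulus (fun P0 P1 => dH (push c P0) (push c P1)) P θ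

/-- Left limit at `m ∈ ℝ≥0∞` of a nondecreasing `ℝ≥0∞`-valued function on `[0,∞)`:
`f(m⁻) = sup_{0 ≤ y < m} f(y)`. -/
noncomputable def leftLimE (f : ℝ → ℝ≥0∞) (m : ℝ≥0∞) : ℝ≥0∞ :=
  ⨆ (y : ℝ) (_ : 0 ≤ y) (_ : ENNReal.ofReal y < m), f y

/-- Right limit at `x ∈ ℝ` of a nondecreasing `ℝ≥0∞`-valued function:
`f(x⁺) = inf_{y > x} f(y)`. -/
noncomputable def rightLimE (f : ℝ → ℝ≥0∞) (x : ℝ) : ℝ≥0∞ :=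
  ⨅ (y : ℝ) (_ : x < y), f y

/-- Left limit of a nondecreasing loss function at `m ∈ ℝ≥0∞`, with the convention
`l(0⁻) = l(0)`, as an element of `ℝ≥0∞`. -/
noncomputable def lossLeftLim (l : ℝ → ℝ) (m : ℝ≥0∞) : ℝ≥0∞ :=
  if m = 0 then ENNReal.ofReal (l 0)
  else ⨆ (y : ℝ) (_ : 0 ≤ y) (_ : ENNReal.ofReal y < m), ENNReal.ofReal (l y)

/-- A (randomized) test is a measurable function with values in `[0,1]`. -/
def IsTest (φ : Ω → ℝ) : Prop := Measurable φ ∧ ∀ ω, 0 ≤ φ ω ∧ φ ω ≤ 1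

/-- Risk of a test: `∫ φ dμ0 + ∫ (1 - φ) dμ1`. -/
noncomputable def testRisk (μ0 μ1 : Measure Ω) (φ : Ω → ℝ) : ℝ :=
  (∫ ω, φ ω ∂μ0) + ∫ ω, (1 - φ ω) ∂μ1

/-- Testing affinity of a pair of measures: `π(μ0, μ1) = inf_φ (∫ φ dμ0 + ∫ (1-φ) dμ1)`. -/
noncomputable def pairAffinity (μ0 μ1 : Measure Ω) : ℝ :=
  sInf {r : ℝ | ∃ φ : Ω → ℝ, IsTest φ ∧ r = testRisk μ0 μ1 φ}

/-- Testing affinity of two sets of measures: `π(M0, M1) = sup π(μ0, μ1)`. -/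
noncomputable def setAffinity (M0 M1 : Set (Measure Ω)) : ℝ :=
  sSup {r : ℝ | ∃ μ0 ∈ M0, ∃ μ1 ∈ M1, r = pairAffinity μ0 μ1}

/-- The set of finite convex combinations of elements of `M`. -/
def convComb (M : Set (Measure Ω)) : Set (Measure Ω) :=
  {μ | ∃ (m : ℕ) (w : Fin m → ℝ≥0∞) (ν : Fin m → Measure Ω),
    (∑ i, w i) = 1 ∧ (∀ i, ν i ∈ M) ∧ μ = ∑ i, w i • ν i}

/-- The upper affinity `η_A^{(n)}(Q, Δ)`, for the channel described through the map
`QPn : P ↦ Q P^{⊗n}`. -/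
noncomputable def etaA {Zn : Type*} [MeasurableSpace Zn] (QPn : Measure X → Measure Zn)
    (P : Set (Measure X)) (θ : Measure X → ℝ) (Δ : ℝ) : ℝ :=
  ⨆ t : ℝ, setAffinity (convComb (QPn '' {μ | μ ∈ P ∧ θ μ ≤ t}))
    (convComb (QPn '' {μ | μ ∈ P ∧ t + Δ ≤ θ μ}))

/-- The affinity `η_2^{(n)}(Q, Δ)` (no convex hulls). -/
noncomputable def eta2 {Zn : Type*} [MeasurableSpace Zn] (QPn : Measure X → Measure Zn)
    (P : Set (Measure X)) (θ : Measure X → ℝ) (Δ : ℝ) : ℝ :=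
  ⨆ t : ℝ, setAffinity (QPn '' {μ | μ ∈ P ∧ θ μ ≤ t}) (QPn '' {μ | μ ∈ P ∧ t + Δ ≤ θ μ})

/-- `Δ_A^{(n)}(Q, η) = sup {Δ ≥ 0 : η_A^{(n)}(Q, Δ) > η}`, as an element of `ℝ≥0∞`. -/
noncomputable def DeltaA {Zn : Type*} [MeasurableSpace Zn] (QPn : Measure X → Measure Zn)
    (P : Set (Measure X)) (θ : Measure X → ℝ) (η : ℝ) : ℝ≥0∞ :=
  ⨆ (Δ : ℝ) (_ : 0 ≤ Δ) (_ : η < etaA QPn P θ Δ), ENNReal.ofReal Δ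

/-- `Δ_2^{(n)}(Q, η) = sup {Δ ≥ 0 : η_2^{(n)}(Q, Δ) > η}`, as an element of `ℝ≥0∞`. -/
noncomputable def Delta2 {Zn : Type*} [MeasurableSpace Zn] (QPn : Measure X → Measure Zn)
    (P : Set (Measure X)) (θ : Measure X → ℝ) (η : ℝ) : ℝ≥0∞ :=
  ⨆ (Δ : ℝ) (_ : 0 ≤ Δ) (_ : η < eta2 QPn P θ Δ), ENNReal.ofReal Δ

/-- The privatized distribution `Q P^{⊗n}` of the observation vector. -/
noncomputable def privProd {Zn : Type*} [MeasurableSpace Zn] (n : ℕ)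
    (Q : (Fin n → X) → Measure Zn) (μ : Measure X) : Measure Zn :=
  (Measure.pi fun _ : Fin n => μ).bind Q

/-- The `Q`-privatized minimax risk `M_n(Q, P, θ)` (with values in `ℝ≥0∞`), where the channel
is described through the map `QPn : P ↦ Q P^{⊗n}`. -/
noncomputable def minimaxRisk {Zn : Type*} [MeasurableSpace Zn] (l : ℝ → ℝ)
    (QPn : Measure X → Measure Zn) (P : Set (Measure X)) (θ : Measure X → ℝ) : ℝ≥0∞ :=
  ⨅ (est : Zn → ℝ) (_ : Measurable est), ⨆ (μ : Measure X) (_ : μ ∈ P),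
    ∫⁻ z, ENNReal.ofReal (l |est z - θ μ|) ∂(QPn μ)

/-- Iterated sequential integral: `seqIntegral K n x g` is
`∫ ⋯ ∫ g(z_1,…,z_n) K_{n-1}(dz_n | x_n, z_{1:n-1}) ⋯ K_0(dz_1 | x_1)`. -/
noncomputable def seqIntegral (K : (i : ℕ) → X × (Fin i → Z) → Measure Z) :
    (n : ℕ) → (Fin n → X) → ((Fin n → Z) → ℝ≥0∞) → ℝ≥0∞
  | 0, _, g => g fun i => i.elim0
  | n + 1, x, g => seqIntegral K n (fun i => x i.castSucc)
      fun zpre => ∫⁻ zn, g (Fin.snoc zpre zn) ∂(K n (x (Fin.last n), zpre))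

/-- An `α`-sequentially interactive channel: `Q` is obtained by sequential composition of
Markov kernels `K i : X × Z^i → Z`, each of which satisfies the `α`-differential privacy
ratio bound in its `X`-argument. -/
def IsSeqInteractive (n : ℕ) (α : ℝ) (Q : Kernel (Fin n → X) (Fin n → Z)) : Prop :=
  ∃ K : (i : ℕ) → Kernel (X × (Fin i → Z)) Z,
    (∀ i, IsMarkovKernel (K i)) ∧
    (∀ (i : ℕ) (x x' : X) (zpre : Fin i → Z) (A : Set Z), MeasurableSet A →
      K i (x, zpre) A ≤ ENNReal.ofReal (Real.exp α) * K i (x', zpre) A) ∧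
    (∀ (x : Fin n → X) (A : Set (Fin n → Z)), MeasurableSet A →
      Q x A = seqIntegral (fun i p => K i p) n x (A.indicator fun _ => 1))

/-- The `α`-private minimax risk `M_{n,α}(P, θ)`: infimum over all output dimensions
`q ∈ ℕ` and all `α`-sequentially interactive channels from `X^n` to `(ℝ^q)^n`. -/
noncomputable def privMinimaxRisk (n : ℕ) (α : ℝ) (l : ℝ → ℝ) (P : Set (Measure X))
    (θ : Measure X → ℝ) : ℝ≥0∞ :=
  ⨅ (q : ℕ) (Q : Kernel (Fin n → X) (Fin n → (Fin q → ℝ))) (_ : IsMarkovKernel Q)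
    (_ : IsSeqInteractive n α Q),
      minimaxRisk l (privProd n fun x => Q x) P θ

/-- The mixture `λ P0 + (1-λ) P1` of two measures. -/
noncomputable def mix (lam : ℝ) (P0 P1 : Measure Ω) : Measure Ω :=
  ENNReal.ofReal lam • P0 + ENNReal.ofReal (1 - lam) • P1

/-- Convexity of a set of measures. -/
def ConvexMeasureSet (P : Set (Measure Ω)) : Prop :=
  ∀ P0 ∈ P, ∀ P1 ∈ P, ∀ lam : ℝ, 0 ≤ lam → lam ≤ 1 → mix lam P0 P1 ∈ P

/-- Linearity of a functional on a (convex) set of measures. -/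
def LinearFunctional (P : Set (Measure X)) (θ : Measure X → ℝ) : Prop :=
  ∀ P0 ∈ P, ∀ P1 ∈ P, ∀ lam : ℝ, 0 ≤ lam → lam ≤ 1 →
    θ (mix lam P0 P1) = lam * θ P0 + (1 - lam) * θ P1

/-- A family of measures is dominated if all its members are absolutely continuous with
respect to a single σ-finite measure. -/
def Dominated (M : Set (Measure Ω)) : Prop :=
  ∃ ν : Measure Ω, SigmaFinite ν ∧ ∀ μ ∈ M, μ ≪ ν

/-- Condition (A): the functional `θ` is bounded on `P`. -/
def CondA (P : Set (Measure X)) (θ : Measure X → ℝ) : Prop := ∃ c : ℝ, ∀ μ ∈ P, |θ μ| ≤ c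

/-- Condition (B): the loss `l : [0,∞) → [0,∞)` is nondecreasing, `l 0 = 0` and
`l(3t/2) ≤ a l(t)` for all `t ≥ 0`. -/
def CondB (l : ℝ → ℝ) (a : ℝ) : Prop :=
  (∀ u v : ℝ, 0 ≤ u → u ≤ v → l u ≤ l v) ∧ (∀ u : ℝ, 0 ≤ u → 0 ≤ l u) ∧ l 0 = 0 ∧
    ∀ u : ℝ, 0 ≤ u → l (3 / 2 * u) ≤ a * l u

/-- Sup-norm of a (bounded) function. -/
noncomputable def supNorm (f : X → ℝ) : ℝ := ⨆ x, |f x|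

/-- The binary privatization channel `Q_1^{(α,ℓ)}`, supported on `{-z0, z0}` with
`z0 = ‖ℓ‖_∞ (e^α + 1)/(e^α - 1)`, giving the point `z0` probability `(1 + ℓ(x)/z0)/2`. -/
noncomputable def binChannel (α : ℝ) (ℓ : X → ℝ) (x : X) : Measure ℝ :=
  ENNReal.ofReal ((1 + ℓ x / (supNorm ℓ * ((Real.exp α + 1) / (Real.exp α - 1)))) / 2) •
      Measure.dirac (supNorm ℓ * ((Real.exp α + 1) / (Real.exp α - 1))) +
    ENNReal.ofReal ((1 - ℓ x / (supNorm ℓ * ((Real.exp α + 1) / (Real.exp α - 1)))) / 2) •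
      Measure.dirac (-(supNorm ℓ * ((Real.exp α + 1) / (Real.exp α - 1))))

/-- `g_d(Q, η) = inf { d(P0, P1) : π(Q P0^{⊗n}, Q P1^{⊗n}) ≤ η }`, as an element of `ℝ≥0∞`
(with `inf ∅ = ∞`). -/
noncomputable def gDist {Zn : Type*} [MeasurableSpace Zn] (d : Measure X → Measure X → ℝ)
    (QPn : Measure X → Measure Zn) (P : Set (Measure X)) (η : ℝ) : ℝ≥0∞ :=
  ⨅ (P0 : Measure X) (_ : P0 ∈ P) (P1 : Measure X) (_ : P1 ∈ P)
    (_ : pairAffinity (QPn P0) (QPn P1) ≤ η), ENNReal.ofReal (d P0 P1)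

/-- Integral of a bounded measurable function against a finite signed measure, via the
Jordan decomposition. -/
noncomputable def sInt (φ : Ω → ℝ) (σ : MeasureTheory.SignedMeasure Ω) : ℝ :=
  (∫ ω, φ ω ∂σ.toJordanDecomposition.posPart) - ∫ ω, φ ω ∂σ.toJordanDecomposition.negPart

/-- Membership in the set `𝕋 = {φ ∈ L∞(μ) : a ≤ ∫ φ f dμ ≤ b  ∀ f ∈ L1(μ), ‖f‖_{L1} ≤ 1}`. -/
def memT (μ : Measure Ω) (a b : ℝ) (φ : Ω → ℝ) : Prop :=
  Measurable φ ∧ (∃ c : ℝ, ∀ᵐ ω ∂μ, |φ ω| ≤ c) ∧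
    ∀ f : Ω → ℝ, Integrable f μ → (∫ ω, |f ω| ∂μ) ≤ 1 →
      a ≤ (∫ ω, φ ω * f ω ∂μ) ∧ (∫ ω, φ ω * f ω ∂μ) ≤ b

/-- The function `G(s,t) = log((1-s)/(1-t)) / log((t/s)·(1-s)/(1-t))`, with `G(s,s) = s`. -/
noncomputable def Gfun (s t : ℝ) : ℝ :=
  if s = t then s
  else Real.log ((1 - s) / (1 - t)) / Real.log (t / s * ((1 - s) / (1 - t)))

/-!
Split the range of `θ` into cells of length `Δ` and search for the cell of `θ(P)` by discarding one
extreme cell at a time: when the two extreme cells are `kΔ` apart, a test decides which of them to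
drop. As long as the true cell survives, it is at most `k` cells away from the others, so an error
above `(L + 1)Δ` forces it to be discarded at a stage `k > L`. At stage `k` only two tests are able
to discard it, namely those having it as their left or as their right extreme cell, and the union
bound over these tests gives the sum over `k`.

Good tests exist by a minimax argument of Kraft and Le Cam: the tests form a weak-* compact convex
set of functionals on `L¹`, and the risk is bilinear in the test and the pair of hypotheses. Both
error probabilities of the resulting randomized test are at most the upper affinity, and Markov's
inequality at level `1/2` turns it into a set at the cost of a factor `2`. The two tests and this
factor make up the constant `4`.
-/

section Tests

namespace IsTest

variable {φ : Ω → ℝ}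

lemma zero : IsTest (0 : Ω → ℝ) := ⟨measurable_const, fun _ => by simp⟩

lemma one : IsTest (1 : Ω → ℝ) := ⟨measurable_const, fun _ => by simp⟩

lemma one_sub (hφ : IsTest φ) : IsTest fun ω => 1 - φ ω :=
  ⟨hφ.1.const_sub 1, fun ω => ⟨sub_nonneg.2 (hφ.2 ω).2, sub_le_self _ (hφ.2 ω).1⟩⟩

lemma norm_le_one (hφ : IsTest φ) (ω : Ω) : ‖φ ω‖ ≤ 1 := by
  rw [Real.norm_of_nonneg (hφ.2 ω).1]
  exact (hφ.2 ω).2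

lemma integrable (hφ : IsTest φ) (μ : Measure Ω) [IsFiniteMeasure μ] : Integrable φ μ :=
  .of_bound hφ.1.aestronglyMeasurable 1 (.of_forall hφ.norm_le_one)

lemma memLp_top (hφ : IsTest φ) (μ : Measure Ω) : MemLp φ ∞ μ :=
  memLp_top_of_bound hφ.1.aestronglyMeasurable 1 (.of_forall hφ.norm_le_one)

lemma integral_nonneg (hφ : IsTest φ) (μ : Measure Ω) : 0 ≤ ∫ ω, φ ω ∂μ :=
  MeasureTheory.integral_nonneg fun ω => (hφ.2 ω).1

lemma testRisk_nonneg (hφ : IsTest φ) (μ₀ μ₁ : Measure Ω) : 0 ≤ testRisk μ₀ μ₁ φ :=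
  add_nonneg (hφ.integral_nonneg μ₀) (hφ.one_sub.integral_nonneg μ₁)

lemma testRisk_eq (hφ : IsTest φ) (μ₀ μ₁ : Measure Ω) [IsProbabilityMeasure μ₁] :
    testRisk μ₀ μ₁ φ = 1 + (∫ ω, φ ω ∂μ₀ - ∫ ω, φ ω ∂μ₁) := by
  rw [testRisk, integral_sub (integrable_const 1) (hφ.integrable μ₁), integral_const,
    probReal_univ, one_smul]
  ring

lemma measure_half_le_le (hφ : IsTest φ) {μ : Measure Ω} [IsFiniteMeasure μ] {η : ℝ}
    (hη : ∫ ω, φ ω ∂μ ≤ η) : μ {ω | 1 / 2 ≤ φ ω} ≤ ENNReal.ofReal (2 * η) := by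
  rw [← ofReal_measureReal]
  have hmarkov := mul_meas_ge_le_integral_of_nonneg (μ := μ)
    (.of_forall fun ω => (hφ.2 ω).1) (hφ.integrable μ) (1 / 2)
  exact ENNReal.ofReal_le_ofReal (by linarith)

end IsTest

lemma pairAffinity_le_testRisk {φ : Ω → ℝ} (hφ : IsTest φ) (μ₀ μ₁ : Measure Ω) :
    pairAffinity μ₀ μ₁ ≤ testRisk μ₀ μ₁ φ := by
  refine csInf_le ⟨0, ?_⟩ ⟨φ, hφ, rfl⟩
  rintro _ ⟨ψ, hψ, rfl⟩
  exact hψ.testRisk_nonneg μ₀ μ₁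

lemma exists_testRisk_lt {μ₀ μ₁ : Measure Ω} {b : ℝ} (hb : pairAffinity μ₀ μ₁ < b) :
    ∃ φ, IsTest φ ∧ testRisk μ₀ μ₁ φ < b := by
  have hne : {r : ℝ | ∃ φ : Ω → ℝ, IsTest φ ∧ r = testRisk μ₀ μ₁ φ}.Nonempty :=
    ⟨_, 0, .zero, rfl⟩
  obtain ⟨_, ⟨φ, hφ, rfl⟩, hlt⟩ := exists_lt_of_csInf_lt hne hb
  exact ⟨φ, hφ, hlt⟩

lemma pairAffinity_le_one (μ₀ μ₁ : Measure Ω) [IsProbabilityMeasure μ₁] :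
    pairAffinity μ₀ μ₁ ≤ 1 :=
  (pairAffinity_le_testRisk .zero μ₀ μ₁).trans_eq (by simp [testRisk])

variable {M₀ M₁ : Set (Measure Ω)}

lemma pairAffinity_le_setAffinity (hM₁ : ∀ μ ∈ M₁, IsProbabilityMeasure μ) {μ₀ μ₁ : Measure Ω}
    (h₀ : μ₀ ∈ M₀) (h₁ : μ₁ ∈ M₁) : pairAffinity μ₀ μ₁ ≤ setAffinity M₀ M₁ := by
  refine le_csSup ⟨1, ?_⟩ ⟨μ₀, h₀, μ₁, h₁, rfl⟩
  rintro _ ⟨ν₀, -, ν₁, hν₁, rfl⟩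
  have := hM₁ ν₁ hν₁
  exact pairAffinity_le_one ν₀ ν₁

lemma setAffinity_le_one (hM₁ : ∀ μ ∈ M₁, IsProbabilityMeasure μ) : setAffinity M₀ M₁ ≤ 1 := by
  refine Real.sSup_le ?_ zero_le_one
  rintro _ ⟨ν₀, -, ν₁, hν₁, rfl⟩
  have := hM₁ ν₁ hν₁
  exact pairAffinity_le_one ν₀ ν₁

end Tests

section ConvexCombinations

variable {M : Set (Measure Ω)}

lemma sum_smul_mem_convComb {ι : Type*} [Fintype ι] {w : ι → ℝ≥0∞} {μ : ι → Measure Ω}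
    (hw : ∑ i, w i = 1) (hμ : ∀ i, μ i ∈ M) : ∑ i, w i • μ i ∈ convComb M := by
  let e := (Fintype.equivFin ι).symm
  exact ⟨Fintype.card ι, w ∘ e, μ ∘ e, (Equiv.sum_comp e w).trans hw, fun i => hμ (e i),
    (Equiv.sum_comp e fun i => w i • μ i).symm⟩

lemma isProbabilityMeasure_of_mem_convComb (hM : ∀ μ ∈ M, IsProbabilityMeasure μ)
    {μ : Measure Ω} (hμ : μ ∈ convComb M) : IsProbabilityMeasure μ := by
  obtain ⟨m, w, ν, hw, hν, rfl⟩ := hμ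
  have (i : Fin m) : IsProbabilityMeasure (ν i) := hM _ (hν i)
  exact ⟨by simp [Measure.finsetSum_apply, hw]⟩

lemma setAffinity_convComb_le_etaA {𝓩 : Type*} [MeasurableSpace 𝓩] {G : Measure X → Measure 𝓩}
    {P : Set (Measure X)} (hG : ∀ μ ∈ P, IsProbabilityMeasure (G μ)) (θ : Measure X → ℝ)
    (t δ : ℝ) :
    setAffinity (convComb (G '' {μ | μ ∈ P ∧ θ μ ≤ t}))
      (convComb (G '' {μ | μ ∈ P ∧ t + δ ≤ θ μ})) ≤ etaA G P θ δ := by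
  refine le_ciSup (f := fun s => setAffinity (convComb (G '' {μ | μ ∈ P ∧ θ μ ≤ s}))
    (convComb (G '' {μ | μ ∈ P ∧ s + δ ≤ θ μ}))) ⟨1, ?_⟩ t
  rintro _ ⟨s, rfl⟩
  refine setAffinity_le_one fun μ => isProbabilityMeasure_of_mem_convComb ?_
  rintro _ ⟨μ', ⟨hμ', -⟩, rfl⟩
  exact hG μ' hμ'

end ConvexCombinations

section DualOfL1

/-- The pairing `(h, f) ↦ ∫ h f dν` of `L∞` with `L¹`, as a map from `L∞` to the dual of `L¹`. -/
noncomputable def l1Pairing (ν : Measure Ω) : Lp ℝ ∞ ν →L[ℝ] StrongDual ℝ (Lp ℝ 1 ν) :=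
  (ContinuousLinearMap.mul ℝ ℝ).lpPairing ν ∞ 1

variable {ν : Measure Ω}

lemma l1Pairing_apply (h : Lp ℝ ∞ ν) (f : Lp ℝ 1 ν) :
    l1Pairing ν h f = ∫ ω, h ω * f ω ∂ν :=
  ContinuousLinearMap.lpPairing_eq_integral (ContinuousLinearMap.mul ℝ ℝ) h f

lemma l1Pairing_toLp_apply {φ : Ω → ℝ} (hφ : MemLp φ ∞ ν) (f : Lp ℝ 1 ν) :
    l1Pairing ν hφ.toLp f = ∫ ω, φ ω * f ω ∂ν := by
  rw [l1Pairing_apply]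
  refine integral_congr_ae ?_
  filter_upwards [hφ.coeFn_toLp] with ω hω
  rw [hω]

lemma l1Pairing_indicatorConstLp (h : Lp ℝ ∞ ν) {s : Set Ω} (hs : MeasurableSet s)
    (hνs : ν s ≠ ∞) : l1Pairing ν h (indicatorConstLp 1 hs hνs 1) = ∫ ω in s, h ω ∂ν := by
  rw [l1Pairing_apply, ← integral_indicator hs]
  refine integral_congr_ae ?_
  filter_upwards [indicatorConstLp_coeFn (p := 1) (hs := hs) (hμs := hνs) (c := (1 : ℝ))]
    with ω hω
  by_cases hωs : ω ∈ s <;> simp [hω, hωs]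

lemma clm_ext_of_indicatorConstLp {p : ℝ≥0∞} [Fact (1 ≤ p)] (hp : p ≠ ∞)
    {Λ Λ' : StrongDual ℝ (Lp ℝ p ν)}
    (h : ∀ ⦃s : Set Ω⦄ (hs : MeasurableSet s) (hνs : ν s ≠ ∞),
      Λ (indicatorConstLp p hs hνs 1) = Λ' (indicatorConstLp p hs hνs 1)) : Λ = Λ' := by
  refine ContinuousLinearMap.ext fun f => Lp.induction hp (fun f => Λ f = Λ' f) ?_ ?_ ?_ f
  · intro c s hs hνs
    have hsmul : indicatorConstLp p hs hνs.ne c = c • indicatorConstLp p hs hνs.ne (1 : ℝ) := by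
      rw [indicatorConstLp, indicatorConstLp, ← MemLp.toLp_const_smul]
      congr 1
      ext ω
      by_cases hω : ω ∈ s <;> simp [hω]
    rw [Lp.simpleFunc.coe_indicatorConst, hsmul, map_smul, map_smul, h hs hνs.ne]
  · intro f g hf hg _ hΛf hΛg
    rw [map_add, map_add, hΛf, hΛg]
  · exact isClosed_eq Λ.continuous Λ'.continuous

variable [IsFiniteMeasure ν]

/-- The inclusion of `L²` into `L¹` for a finite measure. -/
noncomputable def l2ToL1 (ν : Measure Ω) [IsFiniteMeasure ν] : Lp ℝ 2 ν →L[ℝ] Lp ℝ 1 ν :=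
  (ContinuousLinearMap.mul ℝ ℝ).holderL ν 2 2 1 (Lp.const 2 ν 1)

lemma l2ToL1_indicatorConstLp {s : Set Ω} (hs : MeasurableSet s) :
    l2ToL1 ν (indicatorConstLp 2 hs (measure_ne_top ν s) 1) =
      indicatorConstLp 1 hs (measure_ne_top ν s) 1 := by
  refine Lp.ext ?_
  filter_upwards [(ContinuousLinearMap.mul ℝ ℝ).coeFn_holder (r := 1) (Lp.const 2 ν (1 : ℝ))
    (indicatorConstLp 2 hs (measure_ne_top ν s) (1 : ℝ)), Lp.coeFn_const 2 ν (1 : ℝ),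
    indicatorConstLp_coeFn (p := 1) (hs := hs) (hμs := measure_ne_top ν s) (c := (1 : ℝ)),
    indicatorConstLp_coeFn (p := 2) (hs := hs) (hμs := measure_ne_top ν s) (c := (1 : ℝ))]
    with ω hprod hconst hind₁ hind₂
  refine hprod.trans ?_
  rw [hconst, hind₁, hind₂]
  exact one_mul _

lemma exists_integrable_setIntegral_eq (Λ : StrongDual ℝ (Lp ℝ 1 ν)) :
    ∃ h : Ω → ℝ, Integrable h ν ∧ ∀ ⦃s : Set Ω⦄ (hs : MeasurableSet s),
      ∫ ω in s, h ω ∂ν = Λ (indicatorConstLp 1 hs (measure_ne_top ν s) 1) := by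
  let h : Lp ℝ 2 ν := (InnerProductSpace.toDual ℝ (Lp ℝ 2 ν)).symm (Λ.comp (l2ToL1 ν))
  refine ⟨h, (Lp.memLp h).integrable one_le_two, fun s hs => ?_⟩
  rw [← L2.inner_indicatorConstLp_one hs (measure_ne_top ν s), real_inner_comm,
    InnerProductSpace.toDual_symm_apply, ContinuousLinearMap.comp_apply,
    l2ToL1_indicatorConstLp]

theorem exists_l1Pairing_eq (Λ : StrongDual ℝ (Lp ℝ 1 ν)) : ∃ h, l1Pairing ν h = Λ := by
  obtain ⟨h, hint, hΛ⟩ := exists_integrable_setIntegral_eq Λ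
  have abs_setIntegral_le {s : Set Ω} (hs : MeasurableSet s) :
      |∫ ω in s, h ω ∂ν| ≤ ∫ _ in s, ‖Λ‖ ∂ν := by
    rw [hΛ hs, setIntegral_const, smul_eq_mul, mul_comm]
    refine (Λ.le_opNorm _).trans_eq ?_
    rw [norm_indicatorConstLp one_ne_zero ENNReal.one_ne_top]
    simp
  have hle : h ≤ᵐ[ν] fun _ => ‖Λ‖ :=
    ae_le_of_forall_setIntegral_le hint (integrable_const _) fun s hs _ =>
      (le_abs_self _).trans (abs_setIntegral_le hs)
  have hge : (fun _ => -‖Λ‖) ≤ᵐ[ν] h :=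
    ae_le_of_forall_setIntegral_le (integrable_const _) hint fun s hs _ => by
      rw [integral_neg]
      exact neg_le_of_abs_le (abs_setIntegral_le hs)
  have hbdd : MemLp h ∞ ν := by
    refine memLp_top_of_bound hint.aestronglyMeasurable ‖Λ‖ ?_
    filter_upwards [hle, hge] with ω hω hω'
    exact abs_le.2 ⟨hω', hω⟩
  refine ⟨hbdd.toLp, clm_ext_of_indicatorConstLp ENNReal.one_ne_top fun s hs _ => ?_⟩
  rw [← hΛ hs, l1Pairing_indicatorConstLp]
  exact integral_congr_ae (ae_restrict_of_ae hbdd.coeFn_toLp)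

end DualOfL1

section TestFunctionals

open WeakDual

variable {ν : Measure Ω}

/-- The continuous functionals `f ↦ ∫ φ f dν` on `L¹(ν)` given by the tests `φ`, as a subset of
the dual of `L¹(ν)` with the weak-* topology. -/
def testFunctionals (ν : Measure Ω) : Set (WeakDual ℝ (Lp ℝ 1 ν)) :=
  {Λ | ∃ φ : Ω → ℝ, IsTest φ ∧ ∀ f : Lp ℝ 1 ν, Λ f = ∫ ω, φ ω * f ω ∂ν}

lemma IsTest.exists_mem_testFunctionals {φ : Ω → ℝ} (hφ : IsTest φ) (ν : Measure Ω) :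
    ∃ Λ ∈ testFunctionals ν, ∀ f : Lp ℝ 1 ν, Λ f = ∫ ω, φ ω * f ω ∂ν :=
  ⟨StrongDual.toWeakDual (l1Pairing ν (hφ.memLp_top ν).toLp),
    ⟨φ, hφ, l1Pairing_toLp_apply _⟩, l1Pairing_toLp_apply _⟩

lemma testFunctionals_nonempty (ν : Measure Ω) : (testFunctionals ν).Nonempty :=
  let ⟨Λ, hΛ, _⟩ := IsTest.zero.exists_mem_testFunctionals ν
  ⟨Λ, hΛ⟩

lemma norm_le_one_of_mem_testFunctionals {Λ : WeakDual ℝ (Lp ℝ 1 ν)}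
    (hΛ : Λ ∈ testFunctionals ν) : ‖toStrongDual Λ‖ ≤ 1 := by
  obtain ⟨φ, hφ, hΛφ⟩ := hΛ
  refine ContinuousLinearMap.opNorm_le_bound _ zero_le_one fun f => ?_
  rw [toStrongDual_apply, hΛφ, one_mul, L1.norm_eq_integral_norm]
  refine norm_integral_le_of_norm_le (L1.integrable_coeFn f).norm (.of_forall fun ω => ?_)
  rw [norm_mul]
  exact mul_le_of_le_one_left (norm_nonneg _) (hφ.norm_le_one ω)

lemma nonneg_of_mem_testFunctionals {Λ : WeakDual ℝ (Lp ℝ 1 ν)} (hΛ : Λ ∈ testFunctionals ν)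
    {f : Lp ℝ 1 ν} (hf : 0 ≤ f) : 0 ≤ Λ f := by
  obtain ⟨φ, hφ, hΛφ⟩ := hΛ
  rw [hΛφ]
  refine integral_nonneg_of_ae ?_
  filter_upwards [(Lp.coeFn_nonneg f).2 hf] with ω hω
  exact mul_nonneg (hφ.2 ω).1 hω

lemma exists_isTest_ae_eq {h : Ω → ℝ} (hm : AEStronglyMeasurable h ν)
    (h01 : ∀ᵐ ω ∂ν, h ω ∈ Set.Icc 0 1) : ∃ φ, IsTest φ ∧ φ =ᵐ[ν] h := by
  refine ⟨fun ω => max 0 (min 1 (hm.mk h ω)),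
    ⟨measurable_const.max (measurable_const.min hm.measurable_mk),
      fun ω => ⟨le_max_left _ _, max_le zero_le_one (min_le_left _ _)⟩⟩, ?_⟩
  filter_upwards [hm.ae_eq_mk, h01] with ω hmk hω
  rw [← hmk, min_eq_right hω.2, max_eq_right hω.1]

lemma indicatorConstLp_one_nonneg {s : Set Ω} (hs : MeasurableSet s) (hνs : ν s ≠ ∞) :
    0 ≤ indicatorConstLp 1 hs hνs (1 : ℝ) := by
  rw [← Lp.coeFn_nonneg]
  filter_upwards [indicatorConstLp_coeFn (p := 1) (hs := hs) (hμs := hνs) (c := (1 : ℝ))]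
    with ω hω
  rw [hω]
  exact Set.indicator_nonneg (fun _ _ => zero_le_one) ω

variable [IsFiniteMeasure ν]

lemma mem_testFunctionals_of_nonneg {Λ : WeakDual ℝ (Lp ℝ 1 ν)} (hnorm : ‖toStrongDual Λ‖ ≤ 1)
    (hpos : ∀ f : Lp ℝ 1 ν, 0 ≤ f → 0 ≤ Λ f) : Λ ∈ testFunctionals ν := by
  obtain ⟨h, hh⟩ := exists_l1Pairing_eq (toStrongDual Λ)
  have setIntegral_eq {s : Set Ω} (hs : MeasurableSet s) :
      ∫ ω in s, h ω ∂ν = Λ (indicatorConstLp 1 hs (measure_ne_top ν s) 1) := by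
    rw [← l1Pairing_indicatorConstLp, hh, toStrongDual_apply]
  have hint : Integrable h ν := (Lp.memLp h).integrable le_top
  have h0 : 0 ≤ᵐ[ν] h := ae_nonneg_of_forall_setIntegral_nonneg hint fun s hs _ => by
    rw [setIntegral_eq hs]
    exact hpos _ (indicatorConstLp_one_nonneg hs _)
  have h1 : h ≤ᵐ[ν] 1 :=
    ae_le_of_forall_setIntegral_le hint (integrable_const _) fun s hs _ => by
      rw [setIntegral_eq hs, ← toStrongDual_apply]
      refine (le_abs_self _).trans (((toStrongDual Λ).le_opNorm _).trans ?_)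
      refine (mul_le_of_le_one_left (norm_nonneg _) hnorm).trans_eq ?_
      rw [norm_indicatorConstLp one_ne_zero ENNReal.one_ne_top]
      simp
  obtain ⟨φ, hφ, hφh⟩ := exists_isTest_ae_eq (Lp.aestronglyMeasurable h) (h0.and h1)
  refine ⟨φ, hφ, fun f => ?_⟩
  rw [← toStrongDual_apply, ← hh, l1Pairing_apply]
  exact integral_congr_ae (hφh.symm.mul .rfl)

lemma testFunctionals_eq : testFunctionals ν =
    toStrongDual ⁻¹' Metric.closedBall 0 1 ∩ ⋂ (f : Lp ℝ 1 ν) (_ : 0 ≤ f), {Λ | 0 ≤ Λ f} := by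
  ext Λ
  simp only [Set.mem_inter_iff, Set.mem_preimage, mem_closedBall_zero_iff, Set.mem_iInter,
    Set.mem_ofPred_eq]
  exact ⟨fun hΛ => ⟨norm_le_one_of_mem_testFunctionals hΛ,
      fun f hf => nonneg_of_mem_testFunctionals hΛ hf⟩,
    fun hΛ => mem_testFunctionals_of_nonneg hΛ.1 hΛ.2⟩

lemma isCompact_testFunctionals : IsCompact (testFunctionals ν) := by
  rw [testFunctionals_eq]
  refine (WeakDual.isCompact_closedBall 0 1).inter_right ?_
  exact isClosed_iInter fun f => isClosed_iInter fun _ =>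
    isClosed_le continuous_const (eval_continuous f)

lemma convex_testFunctionals : Convex ℝ (testFunctionals ν) := by
  rw [testFunctionals_eq]
  refine ((convex_closedBall (0 : StrongDual ℝ (Lp ℝ 1 ν)) 1).linear_preimage
    (toStrongDual (𝕜 := ℝ) (E := Lp ℝ 1 ν)).toLinearMap).inter ?_
  refine convex_iInter fun f => convex_iInter fun _ Λ hΛ Λ' hΛ' a b ha hb _ => ?_
  exact add_nonneg (mul_nonneg ha hΛ) (mul_nonneg hb hΛ')

end TestFunctionals

section Minimax

theorem exists_forall_le_of_forall_exists_lt {E F β : Type*} [LinearOrder β] [DenselyOrdered β]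
    [TopologicalSpace E] [AddCommGroup E] [Module ℝ E] [IsTopologicalAddGroup E]
    [ContinuousSMul ℝ E] [TopologicalSpace F] [AddCommGroup F] [Module ℝ F]
    [IsTopologicalAddGroup F] [ContinuousSMul ℝ F] {K : Set E} {Y : Set F} {f : E → F → β}
    (hne : K.Nonempty) (hcpt : IsCompact K) (hK : Convex ℝ K) (hY : Convex ℝ Y)
    (hlsc : ∀ y ∈ Y, LowerSemicontinuousOn (fun x => f x y) K)
    (hqcvx : ∀ y ∈ Y, QuasiconvexOn ℝ K fun x => f x y)
    (husc : ∀ x ∈ K, UpperSemicontinuousOn (fun y => f x y) Y)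
    (hqccv : ∀ x ∈ K, QuasiconcaveOn ℝ Y fun y => f x y)
    {c : β} (hc : ∀ y ∈ Y, ∀ b > c, ∃ x ∈ K, f x y < b) :
    ∃ x ∈ K, ∀ y ∈ Y, f x y ≤ c := by
  by_contra! hcon
  obtain ⟨s, hs⟩ : ∃ s : Finset Y, ∀ x ∈ K, ∃ y ∈ s, c < f x y := by
    rw [← LowerSemicontinuousOn.inter_biInter_preimage_Iic_eq_empty_iff_exists_finset hcpt hlsc,
      Set.eq_empty_iff_forall_notMem]
    rintro x ⟨hx, hxY⟩
    obtain ⟨y, hy, hlt⟩ := hcon x hx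
    exact hlt.not_ge (Set.mem_iInter₂.1 hxY y hy)
  have hs' : ∀ x ∈ K, ∃ y ∈ Subtype.val '' (s : Set Y), c < f x y := fun x hx =>
    let ⟨y, hy, hlt⟩ := hs x hx
    ⟨y, ⟨y, hy, rfl⟩, hlt⟩
  obtain ⟨y, hy, hlt⟩ := Sion.exists_lt_iInf_of_lt_iInf_of_finite hne hcpt hlsc hqcvx hY husc hqccv
    hK (Set.toFinite _) (Subtype.coe_image_subset Y ↑s) hs'
  obtain ⟨a, ha, hmin⟩ := (hlsc y hy).exists_isMinOn hne hcpt
  obtain ⟨x, hx, hxlt⟩ := hc y hy _ (hlt a ha)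
  exact (hmin hx).not_gt hxlt

end Minimax

section LeCam

open scoped Pointwise

/-- The densities with respect to `ν` of the measures in `A`, as elements of `L¹(ν)`. -/
def l1Densities (ν : Measure Ω) (A : Set (Measure Ω)) : Set (Lp ℝ 1 ν) :=
  {f | ∃ μ ∈ A, f =ᵐ[ν] fun ω => (μ.rnDeriv ν ω).toReal}

variable {ν : Measure Ω} {A : Set (Measure Ω)}

lemma exists_mem_l1Densities {μ : Measure Ω} [IsFiniteMeasure μ] (hμ : μ ∈ A) (ν : Measure Ω) :
    ∃ f ∈ l1Densities ν A, f =ᵐ[ν] fun ω => (μ.rnDeriv ν ω).toReal :=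
  have hint : Integrable (fun ω => (μ.rnDeriv ν ω).toReal) ν := Measure.integrable_toReal_rnDeriv
  ⟨hint.toL1, ⟨μ, hμ, hint.coeFn_toL1⟩, hint.coeFn_toL1⟩

lemma integral_mul_density {μ : Measure Ω} [SigmaFinite μ] [SigmaFinite ν] (hμν : μ ≪ ν) {f : Ω → ℝ}
    (hf : f =ᵐ[ν] fun ω => (μ.rnDeriv ν ω).toReal) (φ : Ω → ℝ) :
    ∫ ω, φ ω * f ω ∂ν = ∫ ω, φ ω ∂μ := by
  rw [← integral_rnDeriv_smul hμν]
  refine integral_congr_ae ?_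
  filter_upwards [hf] with ω hω
  rw [hω, smul_eq_mul, mul_comm]

lemma exists_mem_convComb_of_mem_convexHull [SigmaFinite ν] (hA : ∀ μ ∈ A, IsFiniteMeasure μ)
    (hAν : ∀ μ ∈ A, μ ≪ ν) {f : Lp ℝ 1 ν} (hf : f ∈ convexHull ℝ (l1Densities ν A)) :
    ∃ μ ∈ convComb A, ∀ φ : Ω → ℝ, IsTest φ → ∫ ω, φ ω * f ω ∂ν = ∫ ω, φ ω ∂μ := by
  obtain ⟨ι, _, w, g, hw0, hw1, hg, rfl⟩ := mem_convexHull_iff_exists_fintype.1 hf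
  choose μ hμ hgμ using hg
  have (i : ι) : IsFiniteMeasure (μ i) := hA _ (hμ i)
  refine ⟨∑ i, ENNReal.ofReal (w i) • μ i, sum_smul_mem_convComb ?_ hμ, fun φ hφ => ?_⟩
  · rw [← ENNReal.ofReal_sum_of_nonneg fun i _ => hw0 i, hw1, ENNReal.ofReal_one]
  obtain ⟨Λ, -, hΛ⟩ := hφ.exists_mem_testFunctionals ν
  rw [← hΛ, map_sum, integral_finsetSum_measure fun i _ =>
    (hφ.integrable (μ i)).smul_measure ENNReal.ofReal_ne_top]
  refine Finset.sum_congr rfl fun i _ => ?_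
  rw [map_smul, hΛ, integral_mul_density (hAν _ (hμ i)) (hgμ i), integral_smul_measure,
    ENNReal.toReal_ofReal (hw0 i)]

variable {A₀ A₁ : Set (Measure Ω)}

lemma exists_mem_testFunctionals_lt [SigmaFinite ν] (h₀ : ∀ μ ∈ A₀, IsFiniteMeasure μ)
    (h₁ : ∀ μ ∈ A₁, IsProbabilityMeasure μ) (hν₀ : ∀ μ ∈ A₀, μ ≪ ν) (hν₁ : ∀ μ ∈ A₁, μ ≪ ν)
    {f : Lp ℝ 1 ν}
    (hf : f ∈ convexHull ℝ (l1Densities ν A₀) - convexHull ℝ (l1Densities ν A₁))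
    {b : ℝ} (hb : setAffinity (convComb A₀) (convComb A₁) - 1 < b) :
    ∃ Λ ∈ testFunctionals ν, Λ f < b := by
  obtain ⟨f₀, hf₀, f₁, hf₁, rfl⟩ := hf
  obtain ⟨μ₀, hμ₀, hμf₀⟩ := exists_mem_convComb_of_mem_convexHull h₀ hν₀ hf₀
  obtain ⟨μ₁, hμ₁, hμf₁⟩ := exists_mem_convComb_of_mem_convexHull
    (fun μ hμ => have := h₁ μ hμ; inferInstance) hν₁ hf₁
  have := isProbabilityMeasure_of_mem_convComb h₁ hμ₁
  have hle : pairAffinity μ₀ μ₁ ≤ setAffinity (convComb A₀) (convComb A₁) :=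
    pairAffinity_le_setAffinity (fun _ => isProbabilityMeasure_of_mem_convComb h₁) hμ₀ hμ₁
  obtain ⟨φ, hφ, hlt⟩ := exists_testRisk_lt (b := 1 + b) (hle.trans_lt (by linarith))
  obtain ⟨Λ, hΛ, hΛφ⟩ := hφ.exists_mem_testFunctionals ν
  refine ⟨Λ, hΛ, ?_⟩
  rw [map_sub, hΛφ, hΛφ, hμf₀ φ hφ, hμf₁ φ hφ]
  rw [hφ.testRisk_eq] at hlt
  linarith

lemma exists_mem_testFunctionals_forall_le [IsFiniteMeasure ν]
    (h₀ : ∀ μ ∈ A₀, IsFiniteMeasure μ) (h₁ : ∀ μ ∈ A₁, IsProbabilityMeasure μ)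
    (hν₀ : ∀ μ ∈ A₀, μ ≪ ν) (hν₁ : ∀ μ ∈ A₁, μ ≪ ν) :
    ∃ Λ ∈ testFunctionals ν,
      ∀ f ∈ convexHull ℝ (l1Densities ν A₀) - convexHull ℝ (l1Densities ν A₁),
        Λ f ≤ setAffinity (convComb A₀) (convComb A₁) - 1 :=
  exists_forall_le_of_forall_exists_lt (f := fun (Λ : WeakDual ℝ (Lp ℝ 1 ν)) f => Λ f)
    (testFunctionals_nonempty ν) isCompact_testFunctionals convex_testFunctionals
    ((convex_convexHull ℝ _).sub (convex_convexHull ℝ _))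
    (fun f _ => (WeakDual.eval_continuous f).continuousOn.lowerSemicontinuousOn)
    (fun _ _ => ConvexOn.quasiconvexOn ⟨convex_testFunctionals, fun _ _ _ _ _ _ _ _ _ => le_rfl⟩)
    (fun Λ _ => (map_continuous Λ).continuousOn.upperSemicontinuousOn)
    (fun Λ _ => ((WeakDual.toStrongDual Λ).toLinearMap.concaveOn
      ((convex_convexHull ℝ _).sub (convex_convexHull ℝ _))).quasiconcaveOn)
    fun _ hf _ hb => exists_mem_testFunctionals_lt h₀ h₁ hν₀ hν₁ hf hb

theorem exists_isTest_forall_testRisk_le (h₀ : ∀ μ ∈ A₀, IsFiniteMeasure μ)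
    (h₁ : ∀ μ ∈ A₁, IsProbabilityMeasure μ) (hdom : Dominated (A₀ ∪ A₁)) :
    ∃ φ, IsTest φ ∧ ∀ μ₀ ∈ A₀, ∀ μ₁ ∈ A₁,
      testRisk μ₀ μ₁ φ ≤ setAffinity (convComb A₀) (convComb A₁) := by
  obtain ⟨ν, hν, hac⟩ := hdom
  have hac_toFinite {μ : Measure Ω} (hμ : μ ∈ A₀ ∪ A₁) : μ ≪ ν.toFinite :=
    (hac μ hμ).trans (absolutelyContinuous_toFinite ν)
  obtain ⟨Λ, ⟨φ, hφ, hΛφ⟩, hΛ⟩ := exists_mem_testFunctionals_forall_le h₀ h₁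
    (fun _ hμ => hac_toFinite (.inl hμ)) (fun _ hμ => hac_toFinite (.inr hμ))
  refine ⟨φ, hφ, fun μ₀ hμ₀ μ₁ hμ₁ => ?_⟩
  have := h₀ μ₀ hμ₀
  have := h₁ μ₁ hμ₁
  obtain ⟨f₀, hf₀, hμf₀⟩ := exists_mem_l1Densities hμ₀ ν.toFinite
  obtain ⟨f₁, hf₁, hμf₁⟩ := exists_mem_l1Densities hμ₁ ν.toFinite
  have hle := hΛ (f₀ - f₁)
    (Set.sub_mem_sub (subset_convexHull ℝ _ hf₀) (subset_convexHull ℝ _ hf₁))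
  rw [map_sub, hΛφ, hΛφ, integral_mul_density (hac_toFinite (.inl hμ₀)) hμf₀,
    integral_mul_density (hac_toFinite (.inr hμ₁)) hμf₁] at hle
  rw [hφ.testRisk_eq]
  linarith

end LeCam

section SeparatingTests

variable {𝓩 : Type*} [MeasurableSpace 𝓩] {G : Measure X → Measure 𝓩} {P : Set (Measure X)}

lemma Dominated.mono {M M' : Set (Measure Ω)} (hM' : Dominated M') (h : M ⊆ M') : Dominated M :=
  let ⟨ν, hν, hac⟩ := hM'
  ⟨ν, hν, fun μ hμ => hac μ (h hμ)⟩

lemma exists_isTest_integral_le_etaA (hG : ∀ μ ∈ P, IsProbabilityMeasure (G μ))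
    (hdom : Dominated (G '' P)) (θ : Measure X → ℝ) (t δ : ℝ) :
    ∃ φ, IsTest φ ∧
      (∀ μ ∈ P, θ μ ≤ t → ∫ z, φ z ∂(G μ) ≤ max (etaA G P θ δ) 0) ∧
      (∀ μ ∈ P, t + δ ≤ θ μ → ∫ z, (1 - φ z) ∂(G μ) ≤ max (etaA G P θ δ) 0) := by
  by_cases hlow : ∃ μ ∈ P, θ μ ≤ t; swap
  · exact ⟨1, .one, fun μ hμ hμt => (hlow ⟨μ, hμ, hμt⟩).elim, by simp⟩
  by_cases hhigh : ∃ μ ∈ P, t + δ ≤ θ μ; swap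
  · exact ⟨0, .zero, by simp, fun μ hμ hμt => (hhigh ⟨μ, hμ, hμt⟩).elim⟩
  obtain ⟨μ₀, hμ₀, hμ₀t⟩ := hlow
  obtain ⟨μ₁, hμ₁, hμ₁t⟩ := hhigh
  have hdom' : Dominated (G '' {μ | μ ∈ P ∧ θ μ ≤ t} ∪ G '' {μ | μ ∈ P ∧ t + δ ≤ θ μ}) :=
    hdom.mono (Set.union_subset (Set.image_mono fun _ h => h.1) (Set.image_mono fun _ h => h.1))
  obtain ⟨φ, hφ, hrisk⟩ := exists_isTest_forall_testRisk_le
    (by rintro _ ⟨μ, ⟨hμ, -⟩, rfl⟩; have := hG μ hμ; infer_instance)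
    (by rintro _ ⟨μ, ⟨hμ, -⟩, rfl⟩; exact hG μ hμ) hdom'
  have hsum {μ μ' : Measure X} (hμ : μ ∈ P) (hμt : θ μ ≤ t) (hμ' : μ' ∈ P)
      (hμt' : t + δ ≤ θ μ') :
      ∫ z, φ z ∂(G μ) + ∫ z, (1 - φ z) ∂(G μ') ≤ max (etaA G P θ δ) 0 :=
    (hrisk _ ⟨μ, ⟨hμ, hμt⟩, rfl⟩ _ ⟨μ', ⟨hμ', hμt'⟩, rfl⟩).trans <|
      (setAffinity_convComb_le_etaA hG θ t δ).trans (le_max_left _ _)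
  exact ⟨φ, hφ,
    fun μ hμ hμt => (le_add_of_nonneg_right (hφ.one_sub.integral_nonneg _)).trans
      (hsum hμ hμt hμ₁ hμ₁t),
    fun μ hμ hμt => (le_add_of_nonneg_left (hφ.integral_nonneg _)).trans
      (hsum hμ₀ hμ₀t hμ hμt)⟩

lemma exists_measurableSet_measure_le_etaA (hG : ∀ μ ∈ P, IsProbabilityMeasure (G μ))
    (hdom : Dominated (G '' P)) (θ : Measure X → ℝ) (t δ : ℝ) :
    ∃ D : Set 𝓩, MeasurableSet D ∧
      (∀ μ ∈ P, θ μ ≤ t → G μ D ≤ ENNReal.ofReal (2 * max (etaA G P θ δ) 0)) ∧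
      (∀ μ ∈ P, t + δ ≤ θ μ → G μ Dᶜ ≤ ENNReal.ofReal (2 * max (etaA G P θ δ) 0)) := by
  obtain ⟨φ, hφ, hφ₀, hφ₁⟩ := exists_isTest_integral_le_etaA hG hdom θ t δ
  refine ⟨{z | 1 / 2 ≤ φ z}, measurableSet_le measurable_const hφ.1, fun μ hμ hμt => ?_,
    fun μ hμ hμt => ?_⟩
  all_goals have := hG μ hμ
  · exact hφ.measure_half_le_le (hφ₀ μ hμ hμt)
  · refine (measure_mono fun z hz => ?_).trans (hφ.one_sub.measure_half_le_le (hφ₁ μ hμ hμt))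
    simp only [Set.mem_compl_iff, Set.mem_ofPred_eq, not_le] at hz ⊢
    linarith

end SeparatingTests

section BinarySearch

variable {𝓩 : Type*} {D : ℕ → ℕ → Set 𝓩}

open Classical in
/-- Binary search for the cell of an unknown parameter. When the cells `a, …, a + k + 1` are still
possible, the test `D a k` compares the two extreme ones: a point of `D a k` discards cell `a`, any
other point discards cell `a + k + 1`. `binarySearch D k a` is the common endpoint of the last two
cells, where cell `j` lies between the endpoints `j` and `j + 1`. -/
noncomputable def binarySearch (D : ℕ → ℕ → Set 𝓩) : ℕ → ℕ → 𝓩 → ℕ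
  | 0, a, _ => a + 1
  | k + 1, a, z =>
    if z ∈ D a (k + 1) then binarySearch D k (a + 1) z else binarySearch D k a z

/-- The points at which a test between two cells at distance `k + 1`, one of which is cell `m`,
discards cell `m`. -/
def misclassified (D : ℕ → ℕ → Set 𝓩) (m k : ℕ) : Set 𝓩 :=
  {z | z ∈ D m k ∨ ∃ a, a + k + 1 = m ∧ z ∉ D a k}

lemma measurable_binarySearch [MeasurableSpace 𝓩] (hD : ∀ a k, MeasurableSet (D a k)) (k a : ℕ) :
    Measurable (binarySearch D k a) := by
  induction k generalizing a with
  | zero => exact measurable_const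
  | succ k ih => exact Measurable.ite (hD _ _) (ih _) (ih _)

lemma binarySearch_mem_Icc (D : ℕ → ℕ → Set 𝓩) (k a : ℕ) (z : 𝓩) :
    binarySearch D k a z ∈ Set.Icc (a + 1) (a + k + 1) := by
  induction k generalizing a with
  | zero => simp [binarySearch]
  | succ k ih =>
    have hleft := ih a
    have hright := ih (a + 1)
    rw [binarySearch]
    split_ifs <;> simp only [Set.mem_Icc] at * <;> omega

lemma binarySearch_near {k a m L : ℕ} {z : 𝓩} (ham : a ≤ m) (hmk : m ≤ a + k + 1)
    (hz : ∀ k' ∈ Finset.Icc (L + 1) k, z ∉ misclassified D m k') :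
    m ≤ binarySearch D k a z + L ∧ binarySearch D k a z ≤ m + L + 1 := by
  induction k generalizing a with
  | zero => simp only [binarySearch]; omega
  | succ k ih =>
    have hz' : ∀ k' ∈ Finset.Icc (L + 1) k, z ∉ misclassified D m k' := fun k' hk' =>
      hz k' (Finset.Icc_subset_Icc_right k.le_succ hk')
    have lt_of_misclassified (h : z ∈ misclassified D m (k + 1)) : k + 1 < L + 1 := by
      by_contra! hLk
      exact hz (k + 1) (Finset.mem_Icc.2 ⟨hLk, le_rfl⟩) h
    have hleft := binarySearch_mem_Icc D k a z
    have hright := binarySearch_mem_Icc D k (a + 1) z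
    rw [Set.mem_Icc] at hleft hright
    by_cases hza : z ∈ D a (k + 1)
    · rw [binarySearch, if_pos hza]
      obtain rfl | ham := ham.eq_or_lt
      · have := lt_of_misclassified (.inl hza)
        omega
      · exact ih ham (by omega) hz'
    · rw [binarySearch, if_neg hza]
      obtain hmk | hmk := hmk.eq_or_lt
      · have := lt_of_misclassified (.inr ⟨a, hmk.symm, hza⟩)
        omega
      · exact ih ham (by omega) hz'

lemma measure_misclassified_le_add [MeasurableSpace 𝓩] {μ : Measure 𝓩} {m k : ℕ} {ε : ℝ≥0∞}
    (hleft : μ (D m k) ≤ ε) (hright : ∀ a, a + k + 1 = m → μ (D a k)ᶜ ≤ ε) :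
    μ (misclassified D m k) ≤ ε + ε := by
  refine (measure_union_le (D m k) _).trans (add_le_add hleft ?_)
  by_cases hk : ∃ a, a + k + 1 = m
  · obtain ⟨a, ha⟩ := hk
    refine (measure_mono ?_).trans (hright a ha)
    rintro z ⟨a', ha', hz⟩
    obtain rfl : a' = a := by omega
    exact hz
  · refine (measure_mono_null ?_ measure_empty).trans_le zero_le
    exact fun z ⟨a, ha, _⟩ => hk ⟨a, ha⟩

lemma abs_add_mul_sub_le {lo Δ x : ℝ} (hΔ : 0 ≤ Δ) {m j L : ℕ} (hlo : lo + m * Δ ≤ x)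
    (hhi : x ≤ lo + (m + 1) * Δ) (hmj : m ≤ j + L) (hjm : j ≤ m + L + 1) :
    |lo + j * Δ - x| ≤ (L + 1) * Δ := by
  have hmj' : (m : ℝ) * Δ ≤ (j + L) * Δ := by gcongr; exact_mod_cast hmj
  have hjm' : (j : ℝ) * Δ ≤ (m + L + 1) * Δ := by gcongr; exact_mod_cast hjm
  rw [abs_le]
  constructor <;> linarith

end BinarySearch

section BinarySearchEstimator

variable {𝓩 : Type*} [MeasurableSpace 𝓩] {G : Measure X → Measure 𝓩} {P : Set (Measure X)}
  {θ : Measure X → ℝ} {lo Δ : ℝ} {D : ℕ → ℕ → Set 𝓩}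

/-- The tests `D a k` separate the cells of the grid `lo + j * Δ` lying to the left of
`lo + (a + 1) * Δ` from those lying to the right of `lo + (a + 1 + k) * Δ`, with both error
probabilities at most twice the upper affinity at distance `k * Δ`. Cell `a + k + 1` is the first
one on the right. -/
def SeparatesCells (G : Measure X → Measure 𝓩) (P : Set (Measure X)) (θ : Measure X → ℝ)
    (lo Δ : ℝ) (D : ℕ → ℕ → Set 𝓩) : Prop :=
  ∀ a k : ℕ, MeasurableSet (D a k) ∧
    (∀ μ ∈ P, θ μ ≤ lo + (a + 1) * Δ →
      G μ (D a k) ≤ ENNReal.ofReal (2 * max (etaA G P θ (k * Δ)) 0)) ∧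
    (∀ μ ∈ P, lo + (a + 1) * Δ + k * Δ ≤ θ μ →
      G μ (D a k)ᶜ ≤ ENNReal.ofReal (2 * max (etaA G P θ (k * Δ)) 0))

lemma exists_separatesCells (hG : ∀ μ ∈ P, IsProbabilityMeasure (G μ)) (hdom : Dominated (G '' P))
    (θ : Measure X → ℝ) (lo Δ : ℝ) : ∃ D, SeparatesCells G P θ lo Δ D := by
  choose D hD using fun a k : ℕ =>
    exists_measurableSet_measure_le_etaA hG hdom θ (lo + (a + 1) * Δ) (k * Δ)
  exact ⟨D, hD⟩

lemma SeparatesCells.measure_misclassified_le (hD : SeparatesCells G P θ lo Δ D) {μ : Measure X}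
    (hμ : μ ∈ P) {m : ℕ} (hlo : lo + m * Δ ≤ θ μ) (hhi : θ μ ≤ lo + (m + 1) * Δ) (k : ℕ) :
    G μ (misclassified D m k) ≤ ENNReal.ofReal (4 * max (etaA G P θ (k * Δ)) 0) := by
  have hright (a : ℕ) (ha : a + k + 1 = m) : lo + (a + 1) * Δ + k * Δ ≤ θ μ := by
    subst ha
    push_cast at hlo
    linarith
  calc G μ (misclassified D m k)
      ≤ ENNReal.ofReal (2 * max (etaA G P θ (k * Δ)) 0) +
          ENNReal.ofReal (2 * max (etaA G P θ (k * Δ)) 0) :=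
        measure_misclassified_le_add ((hD m k).2.1 μ hμ hhi)
          fun a ha => (hD a k).2.2 μ hμ (hright a ha)
    _ = ENNReal.ofReal (4 * max (etaA G P θ (k * Δ)) 0) := by
        rw [← ENNReal.ofReal_add (by positivity) (by positivity)]
        ring_nf

lemma exists_nat_mem_cell {x : ℝ} {n : ℕ} (hΔ : 0 < Δ) (hlo : lo ≤ x) (hhi : x < lo + n * Δ) :
    ∃ m : ℕ, m < n ∧ lo + m * Δ ≤ x ∧ x ≤ lo + (m + 1) * Δ := by
  have hnonneg : 0 ≤ (x - lo) / Δ := div_nonneg (sub_nonneg.2 hlo) hΔ.le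
  refine ⟨⌊(x - lo) / Δ⌋₊, (Nat.floor_lt hnonneg).2 ?_, ?_, ?_⟩
  · rw [div_lt_iff₀ hΔ]
    linarith
  · linarith [(le_div_iff₀ hΔ).1 (Nat.floor_le hnonneg)]
  · linarith [(div_lt_iff₀ hΔ).1 (Nat.lt_floor_add_one ((x - lo) / Δ))]

lemma SeparatesCells.measure_lt_abs_binarySearch_sub_le (hD : SeparatesCells G P θ lo Δ D)
    (hΔ : 0 < Δ) {K : ℕ} {μ : Measure X} (hμ : μ ∈ P) (hlo : lo ≤ θ μ)
    (hhi : θ μ < lo + (K + 2 : ℕ) * Δ) (L : ℕ) :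
    G μ {z | (L + 1) * Δ < |lo + binarySearch D K 0 z * Δ - θ μ|} ≤
      ENNReal.ofReal (4 * ∑ k ∈ Finset.Icc (L + 1) K, max (etaA G P θ (k * Δ)) 0) := by
  obtain ⟨m, hmK, hmlo, hmhi⟩ := exists_nat_mem_cell hΔ hlo hhi
  have hcover : {z | (L + 1) * Δ < |lo + binarySearch D K 0 z * Δ - θ μ|} ⊆
      ⋃ k ∈ Finset.Icc (L + 1) K, misclassified D m k := by
    intro z hz
    by_contra hz'
    simp only [Set.mem_iUnion, not_exists] at hz'
    obtain ⟨hnear, hnear'⟩ := binarySearch_near m.zero_le (by omega) hz'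
    exact hz.not_ge (abs_add_mul_sub_le hΔ.le hmlo hmhi hnear hnear')
  calc _ ≤ ∑ k ∈ Finset.Icc (L + 1) K, G μ (misclassified D m k) :=
        (measure_mono hcover).trans (measure_biUnion_finset_le _ _)
    _ ≤ ∑ k ∈ Finset.Icc (L + 1) K, ENNReal.ofReal (4 * max (etaA G P θ (k * Δ)) 0) :=
        Finset.sum_le_sum fun k _ => hD.measure_misclassified_le hμ hmlo hmhi k
    _ = _ := by
        rw [Finset.mul_sum, ENNReal.ofReal_sum_of_nonneg fun k _ => by positivity]

end BinarySearchEstimator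

section ProductMeasures

lemma absolutelyContinuous_pi {n : ℕ} {E : Fin n → Type*} [∀ i, MeasurableSpace (E i)]
    {μ ν : ∀ i, Measure (E i)} [∀ i, SigmaFinite (μ i)] [∀ i, SigmaFinite (ν i)]
    (h : ∀ i, μ i ≪ ν i) : Measure.pi μ ≪ Measure.pi ν := by
  induction n with
  | zero => rw [Measure.pi_of_empty, Measure.pi_of_empty]
  | succ n ih =>
    have hprod : (μ 0).prod (Measure.pi fun i => μ (Fin.succAbove 0 i)) ≪
        (ν 0).prod (Measure.pi fun i => ν (Fin.succAbove 0 i)) :=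
      (h 0).prod (ih fun i => h _)
    rw [← (measurePreserving_piFinSuccAbove μ 0).symm.map_eq,
      ← (measurePreserving_piFinSuccAbove ν 0).symm.map_eq]
    exact hprod.map (MeasurableEquiv.measurable _)

instance (Q1 : Kernel X Z) [IsMarkovKernel Q1] (μ : Measure X) [IsProbabilityMeasure μ] :
    IsProbabilityMeasure (push (fun x => Q1 x) μ) :=
  inferInstanceAs (IsProbabilityMeasure (μ.bind Q1))

lemma Dominated.image_pi {F : Measure X → Measure Z} {P : Set (Measure X)}
    (hF : ∀ μ ∈ P, IsProbabilityMeasure (F μ)) (hdom : Dominated (F '' P)) (n : ℕ) :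
    Dominated ((fun μ => Measure.pi fun _ : Fin n => F μ) '' P) := by
  obtain ⟨ν, hν, hac⟩ := hdom
  refine ⟨Measure.pi fun _ => ν, inferInstance, ?_⟩
  rintro _ ⟨μ, hμ, rfl⟩
  have := hF μ hμ
  exact absolutelyContinuous_pi fun _ => hac _ ⟨μ, hμ, rfl⟩

end ProductMeasures

theorem statement11_general {X 𝓩 : Type*} [MeasurableSpace X] [MeasurableSpace 𝓩]
    {G : Measure X → Measure 𝓩} {P : Set (Measure X)} (hG : ∀ μ ∈ P, IsProbabilityMeasure (G μ))
    (hdom : Dominated (G '' P)) {θ : Measure X → ℝ} {lo hi : ℝ}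
    (hθ : ∀ μ ∈ P, θ μ ∈ Set.Icc lo hi) {Δ : ℝ} (hΔ : 0 < Δ) {N : ℕ} (hN : hi - lo < N * Δ) :
    ∃ est : 𝓩 → ℝ, Measurable est ∧
      (∀ L : ℕ, ∀ μ ∈ P, G μ {z | (L + 1) * Δ < |est z - θ μ|} ≤
        ENNReal.ofReal (4 * ∑ k ∈ Finset.Icc (L + 1) (N - 2), max (etaA G P θ (k * Δ)) 0)) ∧
      (if 3 ≤ N then ∀ z, ∃ j : ℕ, 1 ≤ j ∧ j ≤ N - 1 ∧ est z = lo + j * Δ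
        else ∀ z, est z = (lo + hi) / 2) := by
  split_ifs with h3
  · obtain ⟨K, rfl⟩ : ∃ K, N = K + 2 := ⟨N - 2, by omega⟩
    obtain ⟨D, hD⟩ := exists_separatesCells hG hdom θ lo Δ
    refine ⟨fun z => lo + binarySearch D K 0 z * Δ, ?_, fun L μ hμ => ?_, fun z => ?_⟩
    · have := measurable_binarySearch (fun a k => (hD a k).1) K 0
      fun_prop
    · exact hD.measure_lt_abs_binarySearch_sub_le hΔ hμ (hθ μ hμ).1
        (by linarith [(hθ μ hμ).2]) L
    · have hmem := Set.mem_Icc.1 (binarySearch_mem_Icc D K 0 z)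
      exact ⟨_, by omega, by omega, rfl⟩
  · refine ⟨fun _ => (lo + hi) / 2, measurable_const, fun L μ hμ => ?_, fun _ => rfl⟩
    have hN2 : (N : ℝ) ≤ 2 := by exact_mod_cast (by omega : N ≤ 2)
    have hle : |(lo + hi) / 2 - θ μ| ≤ (L + 1) * Δ := by
      obtain ⟨hlo, hhi⟩ := hθ μ hμ
      have hNΔ : N * Δ ≤ 2 * Δ := by gcongr
      have hLΔ : 0 ≤ L * Δ := by positivity
      rw [abs_le]
      constructor <;> linarith
    simp [hle.not_gt]

/-- Proposition: the binary search estimator, part (i).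
Suppose `Δ > 0`, `-∞ < M₋ < M₊ < ∞` (with `M₋ = inf_P θ`, `M₊ = sup_P θ`, `M = M₊ - M₋`),
`N` is the smallest integer with `NΔ > M`, and `Q` is a non-interactive channel with
identical Markov marginals `Q1` such that `{Q1 P : P ∈ 𝒫}` is dominated. Then there exists
an estimator `θ̂ : Z^n → ℝ` with
`sup_{P ∈ 𝒫} Q P^{⊗n}(|θ̂ - θ(P)| > (l+1)Δ) ≤ 4 ∑_{k=l+1}^{N-2} max(η_A^{(n)}(Q, kΔ), 0)`
for all `l ∈ ℕ`, taking values in `{M₋ + jΔ : j = 1,…,N-1}` if `N ≥ 3` and constantly equal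
to `(M₋ + M₊)/2` otherwise. -/
theorem statement11 {X Z : Type*} [MeasurableSpace X] [MeasurableSpace Z]
    (n : ℕ) (hn : 0 < n) (P : Set (Measure X)) (hP : ∀ μ ∈ P, IsProbabilityMeasure μ)
    (θ : Measure X → ℝ) (Δ : ℝ) (hΔ : 0 < Δ)
    (Mlo Mhi : ℝ) (hMlo : Mlo = sInf (θ '' P)) (hMhi : Mhi = sSup (θ '' P))
    (hne : P.Nonempty) (hbb : BddBelow (θ '' P)) (hba : BddAbove (θ '' P)) (hlt : Mlo < Mhi)
    (Q1 : Kernel X Z) (hQ1 : IsMarkovKernel Q1)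
    (hdom : Dominated ((fun μ : Measure X => push (fun x => Q1 x) μ) '' P))
    (N : ℕ) (hN1 : Mhi - Mlo < N * Δ) (hN2 : ∀ m : ℕ, Mhi - Mlo < m * Δ → N ≤ m) :
    ∃ est : (Fin n → Z) → ℝ, Measurable est ∧
      (∀ L : ℕ, ∀ μ ∈ P,
        (Measure.pi fun _ : Fin n => push (fun x => Q1 x) μ)
            {z | ((L : ℝ) + 1) * Δ < |est z - θ μ|}
          ≤ ENNReal.ofReal (4 * ∑ k ∈ Finset.Icc (L + 1) (N - 2),
              max (etaA
                (fun μ' : Measure X => Measure.pi fun _ : Fin n => push (fun x => Q1 x) μ')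
                P θ ((k : ℝ) * Δ)) 0)) ∧
      (if 3 ≤ N then ∀ z, ∃ j : ℕ, 1 ≤ j ∧ j ≤ N - 1 ∧ est z = Mlo + (j : ℝ) * Δ
       else ∀ z, est z = (Mlo + Mhi) / 2) := by
  have hpush (μ) (hμ : μ ∈ P) : IsProbabilityMeasure (push (fun x => Q1 x) μ) :=
    have := hP μ hμ
    inferInstance
  refine statement11_general (fun μ hμ => have := hpush μ hμ; inferInstance)
    (hdom.image_pi hpush n) (fun μ hμ => ?_) hΔ hN1
  have hθμ : θ μ ∈ θ '' P := Set.mem_image_of_mem θ hμ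
  exact ⟨hMlo.trans_le (csInf_le hbb hθμ), (le_csSup hba hθμ).trans_eq hMhi.symm⟩

end PrivacyPaper
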